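/- Let q ∈ (0,1) and let n ≥ 9 be an integer. If n > (9(1+q)/(4(1−q)))², then q^n/(1 − q^{2n}) ≤ 7 q^{√n}/(37 n²). -/

import Mathlib

open Real

/-!
Put `s = √n`. The Padé bound `-log q ≥ 2 (1 - q) / (1 + q)` turns the hypothesis on `n` into
`-log q * s ≥ 9 / 2`, so that `q ^ s / q ^ n = exp (-log q * s * (s - 1)) ≥ exp (9 / 2 * (s - 1))`.
The hypothesis also forces `s ≥ 9 / 4`, because `(1 + q) / (1 - q) ≥ 1`, and then this exponential
is at least `8 * s ^ 4 = 8 * n ^ 2`, that is, `8 * n ^ 2 * q ^ n ≤ q ^ s`. As `q ^ s ≤ 1`, the same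
inequality shows that `q ^ n ≤ 1 / 8`, and replacing the denominator `1 - q ^ (2 * n)` by `1` only
costs the passage from `1 / 8` to `7 / 37`.
-/

theorem two_mul_one_sub_div_one_add_le_neg_log {q : ℝ} (hq : 0 < q) (hq1 : q ≤ 1) :
    2 * (1 - q) / (1 + q) ≤ -log q := by
  have hinv : 0 ≤ q⁻¹ - 1 := sub_nonneg.2 ((one_le_inv₀ hq).2 hq1)
  calc 2 * (1 - q) / (1 + q) = 2 * (q⁻¹ - 1) / (q⁻¹ - 1 + 2) := by
        have : q⁻¹ - 1 + 2 = (1 + q) / q := by field_simp; ring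
        rw [this]; field_simp
    _ ≤ log (1 + (q⁻¹ - 1)) := le_log_one_add_of_nonneg hinv
    _ = -log q := by rw [add_sub_cancel, log_inv]

theorem exp_one_mul_div_pow_le_exp {y : ℝ} (hy : 0 ≤ y) (k : ℕ) :
    (exp 1 * (y / k)) ^ k ≤ exp y := by
  rcases k.eq_zero_or_pos with rfl | hk
  · simpa using hy
  · calc (exp 1 * (y / k)) ^ k ≤ exp (y / k) ^ k := by
          gcongr
          exact exp_one_mul_le_exp
      _ = exp y := by rw [← exp_nat_mul]; field_simp

theorem eight_mul_pow_four_le_exp {s : ℝ} (hs : 9 / 4 ≤ s) :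
    8 * s ^ 4 ≤ exp (9 / 2 * (s - 1)) := by
  have hbase : 27 / 16 * s ≤ exp 1 * (9 / 2 * (s - 1) / (4 : ℕ)) :=
    calc 27 / 16 * s ≤ 27 / 10 * (9 / 2 * (s - 1) / (4 : ℕ)) := by push_cast; linarith
      _ ≤ exp 1 * (9 / 2 * (s - 1) / (4 : ℕ)) := by
        gcongr
        · linarith
        · linarith [exp_one_gt_d9]
  calc 8 * s ^ 4 ≤ (27 / 16 * s) ^ 4 := by
        rw [mul_pow]
        gcongr
        norm_num
    _ ≤ (exp 1 * (9 / 2 * (s - 1) / (4 : ℕ))) ^ 4 := by gcongr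
    _ ≤ exp (9 / 2 * (s - 1)) := exp_one_mul_div_pow_le_exp (by linarith) 4

theorem exp_mul_rpow_le_rpow_sqrt {q t c : ℝ} (hq : 0 < q) (ht : 1 ≤ t)
    (hc : c ≤ -log q * √t) : exp (c * (√t - 1)) * q ^ t ≤ q ^ √t := by
  have hexponent : c * (√t - 1) ≤ -log q * √t * (√t - 1) :=
    mul_le_mul_of_nonneg_right hc (sub_nonneg.2 (one_le_sqrt.2 ht))
  rw [rpow_def_of_pos hq, rpow_def_of_pos hq, ← exp_add, exp_le_exp]
  linear_combination hexponent - log q * sq_sqrt (zero_le_one.trans ht)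

theorem div_one_sub_sq_le_of_eight_mul_le {r a b : ℝ} (hr : 0 ≤ r) (ha : 1 ≤ a) (hb : b ≤ 1)
    (h : 8 * a * r ≤ b) : r / (1 - r ^ 2) ≤ 7 * b / (37 * a) := by
  have hr8 : r ≤ 1 / 8 := by linarith [le_mul_of_one_le_left hr ha]
  have hden : 37 / 56 ≤ 1 - r ^ 2 := by nlinarith
  have hb0 : 0 ≤ b := le_trans (by positivity) h
  rw [div_le_div_iff₀ (by linarith) (by positivity)]
  calc r * (37 * a) = 7 * (8 * a * r) * (37 / 56) := by ring
    _ ≤ 7 * b * (1 - r ^ 2) := by gcongr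

theorem tail_bound_of_n_large_general {q t : ℝ} (hq : 0 < q) (hq1 : q < 1)
    (h : (9 * (1 + q) / (4 * (1 - q))) ^ 2 ≤ t) :
    q ^ t / (1 - q ^ (2 * t)) ≤ 7 * q ^ √t / (37 * t ^ 2) := by
  have hq' : 0 < 1 - q := sub_pos.2 hq1
  have hsqrt : 9 * (1 + q) / (4 * (1 - q)) ≤ √t := le_sqrt_of_sq_le h
  have hs : 9 / 4 ≤ √t := by
    refine le_trans ?_ hsqrt
    rw [div_le_div_iff₀ (by positivity) (by positivity)]
    linarith
  have ht : 1 ≤ t := one_le_sqrt.1 (by linarith)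
  have hlog : 9 / 2 ≤ -log q * √t :=
    calc 9 / 2 = 2 * (1 - q) / (1 + q) * (9 * (1 + q) / (4 * (1 - q))) := by field_simp; norm_num
      _ ≤ -log q * √t := by
        gcongr
        · exact neg_nonneg.2 (log_nonpos hq.le hq1.le)
        · exact two_mul_one_sub_div_one_add_le_neg_log hq hq1.le
  have hpow : 8 * t ^ 2 * q ^ t ≤ q ^ √t :=
    calc 8 * t ^ 2 * q ^ t = 8 * √t ^ 4 * q ^ t := by
          rw [pow_mul (√t) 2 2, sq_sqrt (by positivity)]
      _ ≤ exp (9 / 2 * (√t - 1)) * q ^ t := by gcongr; exact eight_mul_pow_four_le_exp hs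
      _ ≤ q ^ √t := exp_mul_rpow_le_rpow_sqrt hq ht hlog
  rw [mul_comm 2 t, rpow_mul hq.le, rpow_two]
  exact div_one_sub_sq_le_of_eight_mul_le (by positivity) (one_le_pow₀ ht)
    (rpow_le_one hq.le hq1.le (sqrt_nonneg t)) hpow

theorem tail_bound_of_n_large (q : ℝ) (hq : 0 < q) (hq1 : q < 1)
    (n : ℕ) (hn : 9 ≤ n) (h : (n : ℝ) > (9 * (1 + q) / (4 * (1 - q))) ^ 2) :
    q ^ n / (1 - q ^ (2 * n)) ≤ 7 * q ^ Real.sqrt n / (37 * (n : ℝ) ^ 2) := by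
  exact_mod_cast tail_bound_of_n_large_general hq hq1 h.le
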